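/- arXiv:2312.03389 — 6 statements merged into one kernel-verified Lean document; each statement's English description precedes it below -/
import Mathlib

section
/- Let H be a real Hilbert space and let A : H → H be a continuous linear operator. Then A is cyclic monotone — that is, for every natural number N and every finite sequence u₀, u₁, …, u_N in H, ⟨A u₀, u₀ − u₁⟩ + ⟨A u₁, u₁ − u₂⟩ + … + ⟨A u_N, u_N − u₀⟩ ≥ 0 — if and only if A is self-adjoint (⟨A u, w⟩ = ⟨u, A w⟩ for all u, w ∈ H) and positive (⟨A u, u⟩ ≥ 0 for all u ∈ H). -/
open scoped RealInnerProductSpace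

open Filter Finset Topology

open LinearMap (BilinForm)

open Module (Dual)

/-!
If the bilinear form `B` is symmetric and nonnegative, then `B x` is a subgradient at `x` of the
convex function `x ↦ B x x / 2`, and a selection of subgradients is cyclically monotone because the
increments of the potential telescope around a cycle.

Conversely, run through the vertices of the affine image of a regular `n`-gon inscribed in the
ellipse with conjugate semi-axes `x` and `y`. Up to a term of order `1 / n`, quadratic in the edges,
the cyclic sum is minus the area of the polygon measured by the skew form `B x y - B y x`, which
tends to `-π (B x y - B y x)`. Hence `B x y ≤ B y x`, and exchanging `x` and `y` gives symmetry.
-/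

section VectorSpace

variable {E : Type*} [AddCommGroup E] [Module ℝ E]

/-- Cyclic monotonicity of a (possibly nonlinear) operator from a real vector space to its algebraic
dual. Cycles are indexed by `Fin (N + 1)`, whose addition wraps around. -/
def CyclicMonotone (A : E → Dual ℝ E) : Prop :=
  ∀ (N : ℕ) (u : Fin (N + 1) → E), 0 ≤ ∑ i, A (u i) (u i - u (i + 1))

theorem cyclicMonotone_of_subgradient {A : E → Dual ℝ E} {f : E → ℝ}
    (hf : ∀ x y, f x + A x (y - x) ≤ f y) : CyclicMonotone A := by
  intro N u
  have telescope : ∑ i, (f (u i) - f (u (i + 1))) = 0 := by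
    rw [sum_sub_distrib, sub_eq_zero]
    exact (Equiv.sum_comp (Equiv.addRight 1) fun i => f (u i)).symm
  rw [← telescope]
  refine sum_le_sum fun i _ => ?_
  have subgradient := hf (u i) (u (i + 1))
  rw [map_sub] at subgradient ⊢
  linarith

theorem cyclicMonotone_of_isPosSemidef {B : BilinForm ℝ E} (hB : B.IsPosSemidef) :
    CyclicMonotone B := by
  refine cyclicMonotone_of_subgradient (f := fun x => B x x / 2) fun x y => ?_
  have symm : B x y = B y x := hB.isSymm.eq x y
  have nonneg : 0 ≤ B (y - x) (y - x) := hB.isNonneg.nonneg (y - x)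
  simp only [map_sub, LinearMap.sub_apply] at nonneg ⊢
  linarith

/-- The ellipse centred at the origin with conjugate semi-axes `x` and `y`, parametrized so that
equally spaced parameters give the affine image of a regular polygon. -/
noncomputable def ellipse (x y : E) (t : ℝ) : E :=
  Real.cos t • x + Real.sin t • y

theorem ellipse_two_pi (x y : E) : ellipse x y (2 * Real.pi) = ellipse x y 0 := by
  simp [ellipse]

-- `ellipse y (-x)` is `ellipse x y` advanced by a quarter turn. Adding the two steps turns
-- `cos t ^ 2` and `sin t ^ 2` into `1`, so that the result does not depend on `t`.
theorem ellipse_step_add_quarterTurn_step (B : BilinForm ℝ E) (x y : E) (t θ : ℝ) :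
    B (ellipse x y t) (ellipse x y t - ellipse x y (t + θ)) +
        B (ellipse y (-x) t) (ellipse y (-x) t - ellipse y (-x) (t + θ)) =
      (1 - Real.cos θ) * (B x x + B y y) - Real.sin θ * (B x y - B y x) := by
  simp only [ellipse, Real.cos_add, Real.sin_add, map_add, map_sub, map_neg, map_smul,
    LinearMap.add_apply, LinearMap.neg_apply, LinearMap.smul_apply, smul_eq_mul]
  linear_combination ((1 - Real.cos θ) * (B x x + B y y) - Real.sin θ * (B x y - B y x)) *
    Real.sin_sq_add_cos_sq t

namespace CyclicMonotone

section Operator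

variable {A : E → Dual ℝ E}

theorem monotone (hA : CyclicMonotone A) (x y : E) : 0 ≤ (A x - A y) (x - y) := by
  have two_cycle : 0 ≤ A x (x - y) + A y (y - x) := by
    simpa [Fin.sum_univ_two, -map_sub] using hA 1 ![x, y]
  rw [LinearMap.sub_apply]
  rwa [← neg_sub x y, map_neg, ← sub_eq_add_neg] at two_cycle

theorem sum_range_nonneg (hA : CyclicMonotone A) {n : ℕ} {u : ℕ → E} (hu : u n = u 0) :
    0 ≤ ∑ i ∈ range n, A (u i) (u i - u (i + 1)) := by
  cases n with
  | zero => simp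
  | succ N =>
    have wrap (i : Fin (N + 1)) : u ↑(i + 1) = u (i + 1) := by
      rw [Fin.val_add_one]
      split_ifs with hi
      · simp [hi, hu]
      · rfl
    simpa only [wrap, Fin.sum_univ_eq_sum_range fun i => A (u i) (u i - u (i + 1))]
      using hA N fun i => u i

end Operator

variable {B : BilinForm ℝ E}

theorem sin_mul_le_one_sub_cos_mul (hB : CyclicMonotone B) (x y : E) {n : ℕ} (hn : n ≠ 0) :
    Real.sin (2 * Real.pi / n) * (B x y - B y x) ≤
      (1 - Real.cos (2 * Real.pi / n)) * (B x x + B y y) := by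
  set θ := 2 * Real.pi / n
  have closed (a b : E) : ellipse a b (n * θ) = ellipse a b ((0 : ℕ) * θ) := by
    rw [mul_div_cancel₀ _ (Nat.cast_ne_zero.mpr hn), ellipse_two_pi, Nat.cast_zero, zero_mul]
  have polygon (a b : E) := hB.sum_range_nonneg (u := fun i => ellipse a b (i * θ)) (closed a b)
  have total := add_nonneg (polygon x y) (polygon y (-x))
  simp only [← sum_add_distrib, Nat.cast_add_one, add_one_mul, ellipse_step_add_quarterTurn_step,
    sum_const, card_range, nsmul_eq_mul] at total
  exact sub_nonneg.mp (nonneg_of_mul_nonneg_right total (by positivity))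

theorem cos_mul_le_sin_mul (hB : CyclicMonotone B) (x y : E) {n : ℕ} (hn : 2 ≤ n) :
    Real.cos (Real.pi / n) * (B x y - B y x) ≤ Real.sin (Real.pi / n) * (B x x + B y y) := by
  have sin_pos : 0 < Real.sin (Real.pi / n) :=
    Real.sin_pos_of_pos_of_lt_pi (by positivity) (div_lt_self Real.pi_pos (by exact_mod_cast hn))
  have polygon := hB.sin_mul_le_one_sub_cos_mul x y (n := n) (by lia)
  rw [mul_div_assoc, Real.sin_two_mul, Real.cos_two_mul, Real.cos_sq'] at polygon
  refine le_of_mul_le_mul_left ?_ (mul_pos two_pos sin_pos)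
  linarith

theorem apply_le_apply_swap (hB : CyclicMonotone B) (x y : E) : B x y ≤ B y x := by
  have angle : Tendsto (fun n : ℕ => Real.pi / n) atTop (𝓝 0) :=
    tendsto_const_div_atTop_nhds_zero_nat Real.pi
  have cos_limit := ((Real.continuous_cos.tendsto 0).comp angle).mul_const (B x y - B y x)
  have sin_limit := ((Real.continuous_sin.tendsto 0).comp angle).mul_const (B x x + B y y)
  have limit := le_of_tendsto_of_tendsto cos_limit sin_limit <|
    (eventually_ge_atTop 2).mono fun _ hn => hB.cos_mul_le_sin_mul x y hn
  rwa [Real.cos_zero, one_mul, Real.sin_zero, zero_mul, sub_nonpos] at limit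

theorem isPosSemidef (hB : CyclicMonotone B) : B.IsPosSemidef where
  eq x y := (hB.apply_le_apply_swap x y).antisymm (hB.apply_le_apply_swap y x)
  nonneg x := by simpa using hB.monotone x 0

end CyclicMonotone

theorem continuousLinear_cyclicMonotone_iff_selfAdjoint_positive_general (B : BilinForm ℝ E) :
    CyclicMonotone B ↔ B.IsPosSemidef :=
  ⟨CyclicMonotone.isPosSemidef, cyclicMonotone_of_isPosSemidef⟩

end VectorSpace

/-- A continuous linear operator on a real Hilbert space is cyclic
monotone if and only if it is self-adjoint and positive. -/
theorem continuousLinear_cyclicMonotone_iff_selfAdjoint_positive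
    {H : Type*} [NormedAddCommGroup H] [InnerProductSpace ℝ H] [CompleteSpace H]
    (A : H →L[ℝ] H) :
    (∀ N : ℕ, ∀ u : Fin (N + 1) → H,
        0 ≤ ∑ i : Fin (N + 1), ⟪A (u i), u i - u (i + 1)⟫) ↔
    ((∀ u w : H, ⟪A u, w⟫ = ⟪u, A w⟫) ∧ (∀ u : H, 0 ≤ ⟪A u, u⟫)) := by
  simpa [CyclicMonotone, BilinForm.isPosSemidef_def, BilinForm.isSymm_def,
    BilinForm.isNonneg_def, real_inner_comm] using
    continuousLinear_cyclicMonotone_iff_selfAdjoint_positive_general (innerₗ H ∘ₗ A.toLinearMap)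
end

section
/- Let m be a positive integer and let g : [0,∞) → (m×m real matrices) be continuous. Suppose that for all continuous compactly supported u, w : [0,∞) → ℝ^m, ∫₀^∞ ⟨u(t), ∫₀^∞ g(t+τ) w(τ) dτ⟩ dt = ∫₀^∞ ⟨w(t), ∫₀^∞ g(t+τ) u(τ) dτ⟩ dt. Then g(t) = g(t)ᵀ for every t ≥ 0. -/
open Matrix MeasureTheory

/-!
Testing the symmetry hypothesis on `u = φ eᵢ` and `w = ψ eⱼ` with scalar test functions `φ`, `ψ`
gives `∫∫ φ(t) ψ(τ) gᵢⱼ(t + τ) = ∫∫ ψ(t) φ(τ) gⱼᵢ(t + τ)`. Since the kernel depends on `t + τ` only,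
Fubini exchanges `φ` and `ψ` on the right, so `gᵢⱼ` and `gⱼᵢ` have the same Hankel form. Such a form
determines its kernel: varying `φ` and then `ψ` in the fundamental lemma of the calculus of
variations recovers the value at `t + τ` for all `t, τ > 0`. Continuity then gives symmetry at `0`.
-/

open Set TopologicalSpace
open scoped Distributions

section TestFunctions

variable {X F : Type*} [TopologicalSpace X] [NormedAddCommGroup F] [NormedSpace ℝ F]

lemma continuousOn_smul_of_tsupport_subset {s U : Set X} {φ : X → ℝ} {f : X → F} (hU : IsOpen U)
    (hφ : Continuous φ) (hφU : tsupport φ ⊆ U) (hf : ContinuousOn f (s ∩ U)) :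
    ContinuousOn (fun x ↦ φ x • f x) s := by
  intro x hxs
  by_cases hx : x ∈ tsupport φ
  · have hfx : ContinuousWithinAt f s x :=
      (continuousWithinAt_inter (hU.mem_nhds (hφU hx))).1 (hf x ⟨hxs, hφU hx⟩)
    exact hφ.continuousWithinAt.smul hfx
  · have hzero : (fun x ↦ φ x • f x) =ᶠ[nhds x] 0 := by
      filter_upwards [notMem_tsupport_iff_eventuallyEq.1 hx] with y hy
      simp [hy]
    exact (continuousAt_const.congr hzero.symm).continuousWithinAt

variable {E : Type*} [NormedAddCommGroup E] [NormedSpace ℝ E] {Ω : Opens E} {n : ℕ∞}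

lemma continuous_testFunction_smul (φ : 𝓓^{n}(Ω, ℝ)) {f : E → F} (hf : ContinuousOn f Ω) :
    Continuous fun x ↦ φ x • f x := by
  rw [← continuousOn_univ]
  exact continuousOn_smul_of_tsupport_subset Ω.isOpen φ.continuous φ.tsupport_subset
    (hf.mono inter_subset_right)

/-- The vector-valued test function `x ↦ φ(x) v` pointing in the constant direction `v`. -/
noncomputable def testFunctionSMulConst (φ : 𝓓^{n}(Ω, ℝ)) (v : F) : 𝓓^{n}(Ω, F) :=
  TestFunction.postcompCLM (ContinuousLinearMap.toSpanSingleton ℝ v) φ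

lemma testFunctionSMulConst_apply (φ : 𝓓^{n}(Ω, ℝ)) (v : F) (x : E) :
    testFunctionSMulConst φ v x = φ x • v :=
  rfl

variable [MeasurableSpace E] [BorelSpace E] {μ : Measure E}

lemma integrable_testFunction_smul [IsFiniteMeasureOnCompacts μ] (φ : 𝓓^{n}(Ω, ℝ)) {f : E → F}
    (hf : ContinuousOn f Ω) : Integrable (fun x ↦ φ x • f x) μ :=
  (continuous_testFunction_smul φ hf).integrable_of_hasCompactSupport φ.hasCompactSupport.smul_right

lemma eqOn_of_setIntegral_testFunction_smul_eq [FiniteDimensional ℝ E] [CompleteSpace F]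
    [IsLocallyFiniteMeasure μ] [μ.IsOpenPosMeasure] {f₁ f₂ : E → F}
    (hf₁ : ContinuousOn f₁ Ω) (hf₂ : ContinuousOn f₂ Ω)
    (h : ∀ φ : 𝓓(Ω, ℝ), ∫ x in Ω, φ x • f₁ x ∂μ = ∫ x in Ω, φ x • f₂ x ∂μ) :
    EqOn f₁ f₂ Ω := by
  have hae : ∀ᵐ x ∂μ.restrict Ω, x ∈ (Ω : Set E) → f₁ x - f₂ x = 0 := by
    refine Ω.isOpen.ae_eq_zero_of_integral_contDiff_smul_eq_zero
      ((hf₁.sub hf₂).locallyIntegrableOn Ω.isOpen.measurableSet) fun φ hφ hφc hφΩ ↦ ?_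
    let φ' : 𝓓(Ω, ℝ) := ⟨φ, hφ, hφc, hφΩ⟩
    simp only [smul_sub]
    exact (integral_sub (integrable_testFunction_smul φ' hf₁)
      (integrable_testFunction_smul φ' hf₂)).trans (sub_eq_zero.2 (h φ'))
  refine Measure.eqOn_open_of_ae_eq (μ := μ) ?_ Ω.isOpen hf₁ hf₂
  filter_upwards [hae, ae_restrict_mem Ω.isOpen.measurableSet] with x hx hxΩ
  exact sub_eq_zero.1 (hx hxΩ)

end TestFunctions

/-- The open half-line `(0, ∞)`, as the domain on which test inputs are supported. -/
abbrev openHalfLine : Opens ℝ := ⟨Ioi 0, isOpen_Ioi⟩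

lemma continuousOn_comp_const_add {Y : Type*} [TopologicalSpace Y] {h : ℝ → Y}
    (hh : ContinuousOn h (Ioi 0)) {t : ℝ} (ht : 0 ≤ t) :
    ContinuousOn (fun τ ↦ h (t + τ)) (Ioi 0) :=
  hh.comp (by fun_prop) fun _ hτ ↦ add_pos_of_nonneg_of_pos ht hτ

section HankelForm

variable {F : Type*} [NormedAddCommGroup F] [NormedSpace ℝ F] {n n₁ n₂ : ℕ∞}

/-- The Hankel operator `(Γψ)(t) = ∫₀^∞ ψ(τ) h(t + τ) dτ` of a vector-valued kernel `h`, acting on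
scalar inputs `ψ`. -/
noncomputable def hankelOperator (h : ℝ → F) (ψ : ℝ → ℝ) (t : ℝ) : F :=
  ∫ τ in Ioi (0 : ℝ), ψ τ • h (t + τ)

/-- The Hankel form `∫₀^∞ φ(t) (Γψ)(t) dt` of a vector-valued kernel `h` on scalar inputs. -/
noncomputable def hankelForm (h : ℝ → F) (φ ψ : ℝ → ℝ) : F :=
  ∫ t in Ioi (0 : ℝ), φ t • hankelOperator h ψ t

lemma continuousOn_hankelOperator {h : ℝ → F} (hh : ContinuousOn h (Ioi 0))
    (ψ : 𝓓^{n}(openHalfLine, ℝ)) : ContinuousOn (hankelOperator h ψ) (Ici 0) := by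
  refine continuousOn_integral_of_compact_support ψ.hasCompactSupport ?_ fun t τ _ hτ ↦ by
    simp [image_eq_zero_of_notMem_tsupport hτ]
  refine continuousOn_smul_of_tsupport_subset (U := Prod.snd ⁻¹' Ioi 0)
    (isOpen_Ioi.preimage continuous_snd) (φ := fun p ↦ ψ p.2) (f := fun p : ℝ × ℝ ↦ h (p.1 + p.2))
    (by fun_prop) ?_ ?_
  · exact (tsupport_comp_subset_preimage ψ continuous_snd).trans (preimage_mono ψ.tsupport_subset)
  · exact hh.comp (by fun_prop) fun _ ⟨⟨ht, _⟩, hτ⟩ ↦ add_pos_of_nonneg_of_pos (mem_Ici.1 ht) hτ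

lemma hankelForm_comm {h : ℝ → F} (hh : ContinuousOn h (Ioi 0))
    (φ : 𝓓^{n₁}(openHalfLine, ℝ)) (ψ : 𝓓^{n₂}(openHalfLine, ℝ)) :
    hankelForm h φ ψ = hankelForm h ψ φ := by
  let f : ℝ → ℝ → F := fun t τ ↦ (φ t * ψ τ) • h (t + τ)
  have htsupport : tsupport (fun p : ℝ × ℝ ↦ φ p.1 * ψ p.2) ⊆ tsupport φ ×ˢ tsupport ψ := by
    refine closure_minimal (fun p hp ↦ ?_) (isClosed_tsupport φ |>.prod (isClosed_tsupport ψ))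
    exact ⟨subset_tsupport φ (left_ne_zero_of_mul hp), subset_tsupport ψ (right_ne_zero_of_mul hp)⟩
  have hcompact : HasCompactSupport fun p : ℝ × ℝ ↦ φ p.1 * ψ p.2 :=
    (φ.hasCompactSupport.isCompact.prod ψ.hasCompactSupport).of_isClosed_subset
      (isClosed_tsupport _) htsupport
  have hcont : Continuous f.uncurry := by
    rw [← continuousOn_univ]
    refine continuousOn_smul_of_tsupport_subset (isOpen_Ioi.prod isOpen_Ioi) (by fun_prop)
      (htsupport.trans (prod_mono φ.tsupport_subset ψ.tsupport_subset)) ?_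
    exact hh.comp (by fun_prop) fun _ ⟨_, ht, hτ⟩ ↦ add_pos (mem_Ioi.1 ht) hτ
  calc hankelForm h φ ψ
      = ∫ t in Ioi (0 : ℝ), ∫ τ in Ioi (0 : ℝ), f t τ := by
        simp only [hankelForm, hankelOperator, f, ← integral_smul, smul_smul]
    _ = ∫ τ in Ioi (0 : ℝ), ∫ t in Ioi (0 : ℝ), f t τ :=
        integral_integral_swap_of_hasCompactSupport hcont hcompact.smul_right
    _ = hankelForm h ψ φ := by
        simp only [hankelForm, hankelOperator, f, ← integral_smul, smul_smul, mul_comm, add_comm]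

theorem eqOn_of_hankelForm_eq [CompleteSpace F] {h₁ h₂ : ℝ → F}
    (hh₁ : ContinuousOn h₁ (Ioi 0)) (hh₂ : ContinuousOn h₂ (Ioi 0))
    (heq : ∀ φ ψ : 𝓓(openHalfLine, ℝ), hankelForm h₁ φ ψ = hankelForm h₂ φ ψ) :
    EqOn h₁ h₂ (Ioi 0) := by
  have hoperator (ψ : 𝓓(openHalfLine, ℝ)) :
      EqOn (hankelOperator h₁ ψ) (hankelOperator h₂ ψ) openHalfLine :=
    eqOn_of_setIntegral_testFunction_smul_eq
      ((continuousOn_hankelOperator hh₁ ψ).mono Ioi_subset_Ici_self)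
      ((continuousOn_hankelOperator hh₂ ψ).mono Ioi_subset_Ici_self) (heq · ψ)
  have htranslate {t : ℝ} (ht : 0 < t) :
      EqOn (fun τ ↦ h₁ (t + τ)) (fun τ ↦ h₂ (t + τ)) openHalfLine :=
    eqOn_of_setIntegral_testFunction_smul_eq (continuousOn_comp_const_add hh₁ ht.le)
      (continuousOn_comp_const_add hh₂ ht.le) fun ψ ↦ hoperator ψ ht
  intro s hs
  have hs2 : 0 < s / 2 := half_pos hs
  simpa using htranslate hs2 hs2

end HankelForm

section MatrixKernel

variable {ι A : Type*} [Fintype ι] [NormedRing A] [NormedAlgebra ℝ A]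

/-- The Hankel form `∫₀^∞ u(t) ⬝ (∫₀^∞ g(t + τ) w(τ) dτ) dt` of a matrix kernel `g` on
vector-valued inputs. -/
noncomputable def matrixHankelForm (g : ℝ → Matrix ι ι A) (u w : ℝ → ι → A) : A :=
  ∫ t in Ioi (0 : ℝ), u t ⬝ᵥ ∫ τ in Ioi (0 : ℝ), g (t + τ) *ᵥ w τ

lemma matrixHankelForm_testFunctionSMulConst_single [DecidableEq ι] [CompleteSpace A]
    {g : ℝ → Matrix ι ι A} (hg : ContinuousOn g (Ioi 0)) {n₁ n₂ : ℕ∞}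
    (φ : 𝓓^{n₁}(openHalfLine, ℝ)) (ψ : 𝓓^{n₂}(openHalfLine, ℝ)) (i j : ι) :
    matrixHankelForm g (testFunctionSMulConst φ (Pi.single i 1))
      (testFunctionSMulConst ψ (Pi.single j 1)) = hankelForm (g · i j) φ ψ := by
  refine setIntegral_congr_fun measurableSet_Ioi fun t (ht : 0 < t) ↦ ?_
  have hentry (k : ι) : ContinuousOn (fun τ ↦ g (t + τ) k j) (Ioi 0) :=
    continuousOn_comp_const_add (h := (g · k j)) (by fun_prop) ht.le
  have hcolumn (τ : ℝ) : g (t + τ) *ᵥ testFunctionSMulConst ψ (Pi.single j 1) τ =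
      fun k ↦ ψ τ • g (t + τ) k j := by
    ext k
    simp [testFunctionSMulConst_apply, mulVec_smul]
  simp only [hcolumn]
  simp only [testFunctionSMulConst_apply, smul_dotProduct, single_one_dotProduct]
  rw [eval_integral fun k ↦ integrable_testFunction_smul ψ (hentry k), hankelOperator]

theorem hankel_bilinear_form_symmetric_implies_kernel_symmetric_general [CompleteSpace A]
    {g : ℝ → Matrix ι ι A} (hg : ContinuousOn g (Ici 0))
    (hsym : ∀ u w : 𝓓(openHalfLine, ι → A), matrixHankelForm g u w = matrixHankelForm g w u)
    {t : ℝ} (ht : 0 ≤ t) : (g t).IsSymm := by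
  classical
  have hg' : ContinuousOn g (Ioi 0) := hg.mono Ioi_subset_Ici_self
  let e (i : ι) : ι → A := Pi.single i 1
  have hentry (i j : ι) : EqOn (g · j i) (g · i j) (Ioi 0) := by
    refine eqOn_of_hankelForm_eq (by fun_prop) (by fun_prop) fun φ ψ ↦ ?_
    calc hankelForm (g · j i) φ ψ
        = matrixHankelForm g (testFunctionSMulConst φ (e j)) (testFunctionSMulConst ψ (e i)) :=
          (matrixHankelForm_testFunctionSMulConst_single hg' φ ψ j i).symm
      _ = matrixHankelForm g (testFunctionSMulConst ψ (e i)) (testFunctionSMulConst φ (e j)) :=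
          hsym _ _
      _ = hankelForm (g · i j) ψ φ := matrixHankelForm_testFunctionSMulConst_single hg' ψ φ i j
      _ = hankelForm (g · i j) φ ψ := hankelForm_comm (by fun_prop) ψ φ
  have hsymm : EqOn (fun s ↦ (g s)ᵀ) g (Ioi 0) := fun s hs ↦ by
    ext i j
    exact hentry i j hs
  exact hsymm.of_subset_closure (by fun_prop) hg Ioi_subset_Ici_self (closure_Ioi 0).superset ht

end MatrixKernel

/-- if the Hankel bilinear form with continuous kernel g is symmetric
on continuous compactly supported inputs, then g(t) is symmetric for all t ≥ 0. -/
theorem hankel_bilinear_form_symmetric_implies_kernel_symmetric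
    (m : ℕ) (hm : 0 < m) (g : ℝ → Matrix (Fin m) (Fin m) ℝ)
    (hgcont : ContinuousOn g (Set.Ici 0))
    (hsym : ∀ u w : ℝ → Fin m → ℝ,
      Continuous u → HasCompactSupport u → Continuous w → HasCompactSupport w →
      ∫ t in Set.Ioi (0:ℝ), u t ⬝ᵥ (∫ τ in Set.Ioi (0:ℝ), g (t + τ) *ᵥ w τ)
        = ∫ t in Set.Ioi (0:ℝ), w t ⬝ᵥ (∫ τ in Set.Ioi (0:ℝ), g (t + τ) *ᵥ u τ)) :
    ∀ t : ℝ, 0 ≤ t → (g t).IsSymm :=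
  fun _ ht ↦ hankel_bilinear_form_symmetric_implies_kernel_symmetric_general hgcont
    (fun u w ↦ hsym u w u.continuous u.hasCompactSupport w.continuous w.hasCompactSupport) ht
end

section
/- Let n, m, N be positive integers, let A be a real symmetric negative semidefinite n×n matrix and let C be a real m×n matrix. Then the shifted block Hankel matrix of size (N·m)×(N·m) whose (i,j) block (for 0 ≤ i, j ≤ N−1) is the m×m matrix C A^{i+j+1} Cᵀ is symmetric negative semidefinite. -/
open Matrix

/-!
Since `A` is Hermitian, the shifted Hankel matrix factors as `H = 𝒪 * A * 𝒪ᴴ`, where `𝒪` stacks the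
blocks `C * A ^ i`. Hence `-H = 𝒪 * (-A) * 𝒪ᴴ` is positive semidefinite along with `-A`.
-/

section Factorization

variable {l m n R : Type*} [Fintype n] [DecidableEq n] [Semiring R]

/-- The observability matrix of the pair `(A, C)` with `N` block rows, the `i`-th being `C * A ^ i`.
A row is indexed by its block together with its position inside that block. -/
def observabilityMatrix (N : ℕ) (A : Matrix n n R) (C : Matrix m n R) :
    Matrix (Fin N × m) n R :=
  of fun p ↦ (C * A ^ (p.1 : ℕ)) p.2

/-- The controllability matrix of the pair `(A, B)` with `N` block columns, the `j`-th being
`A ^ j * B`. It is the adjoint counterpart of `observabilityMatrix`. -/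
def controllabilityMatrix (N : ℕ) (A : Matrix n n R) (B : Matrix n l R) :
    Matrix n (Fin N × l) R :=
  of fun k q ↦ (A ^ (q.1 : ℕ) * B) k q.2

/-- The `N × M` block Hankel matrix of the Markov parameters of `(A, B, C)`, shifted by one step:
its `(i, j)` block is `C * A ^ (i + j + 1) * B`. -/
def shiftedBlockHankelMatrix (N M : ℕ) (A : Matrix n n R) (B : Matrix n l R) (C : Matrix m n R) :
    Matrix (Fin N × m) (Fin M × l) R :=
  of fun p q ↦ (C * A ^ ((p.1 : ℕ) + (q.1 : ℕ) + 1) * B) p.2 q.2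

theorem shiftedBlockHankelMatrix_eq_mul (N M : ℕ) (A : Matrix n n R) (B : Matrix n l R)
    (C : Matrix m n R) :
    shiftedBlockHankelMatrix N M A B C =
      observabilityMatrix N A C * A * controllabilityMatrix M A B := by
  ext ⟨i, a⟩ ⟨j, b⟩
  have block_eq : C * A ^ ((i : ℕ) + (j : ℕ) + 1) * B =
      C * A ^ (i : ℕ) * A * (A ^ (j : ℕ) * B) := by
    rw [add_right_comm, pow_add, pow_succ]
    simp only [Matrix.mul_assoc]
  exact congr_fun₂ block_eq a b

theorem conjTranspose_observabilityMatrix [StarRing R] (N : ℕ) (A : Matrix n n R)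
    (C : Matrix m n R) :
    (observabilityMatrix N A C)ᴴ = controllabilityMatrix N Aᴴ Cᴴ := by
  ext k ⟨i, a⟩
  have block_eq : (C * A ^ (i : ℕ))ᴴ = Aᴴ ^ (i : ℕ) * Cᴴ := by
    rw [conjTranspose_mul, conjTranspose_pow]
  exact congr_fun₂ block_eq k a

theorem shiftedBlockHankelMatrix_conjTranspose_eq_mul [StarRing R] (N : ℕ) {A : Matrix n n R}
    (hA : A.IsHermitian) (C : Matrix m n R) :
    shiftedBlockHankelMatrix N N A Cᴴ C =
      observabilityMatrix N A C * A * (observabilityMatrix N A C)ᴴ := by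
  rw [shiftedBlockHankelMatrix_eq_mul, conjTranspose_observabilityMatrix, hA.eq]

end Factorization

theorem shifted_block_hankel_matrix_negSemidef_general {m n R : Type*} [Finite m] [Fintype n]
    [DecidableEq n] [Ring R] [PartialOrder R] [StarRing R] (N : ℕ) {A : Matrix n n R}
    (hA : (-A).PosSemidef) (C : Matrix m n R) :
    (-shiftedBlockHankelMatrix N N A Cᴴ C).PosSemidef := by
  have factorization : -shiftedBlockHankelMatrix N N A Cᴴ C =
      observabilityMatrix N A C * -A * (observabilityMatrix N A C)ᴴ := by
    rw [shiftedBlockHankelMatrix_conjTranspose_eq_mul N (isHermitian_neg_iff.mp hA.isHermitian),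
      Matrix.mul_neg, Matrix.neg_mul]
  rw [factorization]
  exact hA.mul_mul_conjTranspose_same _

/-- for A symmetric negative semidefinite and any C, the shifted
block Hankel matrix with (i,j) block C A^{i+j+1} Cᵀ is symmetric negative
semidefinite (its negation is positive semidefinite). -/
theorem shifted_block_hankel_matrix_negSemidef
    (n m N : ℕ) (hn : 0 < n) (hm : 0 < m) (hN : 0 < N)
    (A : Matrix (Fin n) (Fin n) ℝ) (hAsymm : A.IsSymm) (hAnsd : (-A).PosSemidef)
    (C : Matrix (Fin m) (Fin n) ℝ) :
    (-(Matrix.of fun (p q : Fin N × Fin m) =>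
      (C * A ^ ((p.1 : ℕ) + (q.1 : ℕ) + 1) * Cᵀ) p.2 q.2)).PosSemidef := by
  rw [← conjTranspose_eq_transpose_of_trivial]
  exact shifted_block_hankel_matrix_negSemidef_general N hAnsd C
end

section
/- Let Λ be a real symmetric positive definite matrix and let M be a real square matrix of the same size such that ΛM is symmetric and every complex eigenvalue of M has negative real part. Then every eigenvalue of M is real and negative, and ΛM is symmetric negative definite. -/
open Matrix

/-!
If `Λ = star u * u` with `u` invertible, then `Λ * M = star u * (u * M * u⁻¹) * u`, so `Λ * M` is
`⋆`-congruent to `u * M * u⁻¹`. Congruence transports self-adjointness and strict positivity, while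
similarity transports the spectrum; hence `M` is similar to a self-adjoint element, and the signs of
its spectrum decide the definiteness of `Λ * M`.
-/

section Conjugation

variable {A : Type*}

lemma star_left_conjugate_units_conjugate [Monoid A] [StarMul A] (u : Aˣ) (a : A) :
    star (u : A) * (u * a * ↑u⁻¹) * u = star (u : A) * u * a := by
  simp only [mul_assoc, Units.inv_mul, mul_one]

lemma isSelfAdjoint_units_conjugate_iff [Monoid A] [StarMul A] (u : Aˣ) (a : A) :
    IsSelfAdjoint (u * a * ↑u⁻¹) ↔ IsSelfAdjoint (star (u : A) * u * a) := by
  rw [← star_left_conjugate_units_conjugate, u.isUnit.isSelfAdjoint_conjugate_iff']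

lemma isStrictlyPositive_units_conjugate_iff [Semiring A] [StarRing A] [PartialOrder A]
    [StarOrderedRing A] (u : Aˣ) (a : A) :
    IsStrictlyPositive (u * a * ↑u⁻¹) ↔ IsStrictlyPositive (star (u : A) * u * a) := by
  rw [← star_left_conjugate_units_conjugate, u.isUnit.isStrictlyPositive_star_left_conjugate_iff]

end Conjugation

section CStarAlgebra

variable {A : Type*} [CStarAlgebra A] [PartialOrder A] [StarOrderedRing A] {p a : A}

lemma exists_units_eq_star_mul_self_of_isStrictlyPositive (hp : IsStrictlyPositive p) :
    ∃ u : Aˣ, p = star (u : A) * u := by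
  obtain ⟨_, ⟨u, rfl⟩, hu⟩ := CStarAlgebra.isStrictlyPositive_iff_eq_star_mul_self.mp hp
  exact ⟨u, hu⟩

lemma im_eq_zero_of_mem_spectrum_of_isSelfAdjoint_mul (hp : IsStrictlyPositive p)
    (hpa : IsSelfAdjoint (p * a)) {z : ℂ} (hz : z ∈ spectrum ℂ a) : z.im = 0 := by
  obtain ⟨u, rfl⟩ := exists_units_eq_star_mul_self_of_isStrictlyPositive hp
  rw [← spectrum.units_conjugate (u := u)] at hz
  exact ((isSelfAdjoint_units_conjugate_iff u a).mpr hpa).im_eq_zero_of_mem_spectrum hz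

lemma isStrictlyPositive_mul_iff_spectrum_pos (hp : IsStrictlyPositive p)
    (hpa : IsSelfAdjoint (p * a)) :
    IsStrictlyPositive (p * a) ↔ ∀ x ∈ spectrum ℝ a, 0 < x := by
  obtain ⟨u, rfl⟩ := exists_units_eq_star_mul_self_of_isStrictlyPositive hp
  rw [← isStrictlyPositive_units_conjugate_iff, ← spectrum.units_conjugate (u := u)]
  exact StarOrderedRing.isStrictlyPositive_iff_spectrum_pos _
    ((isSelfAdjoint_units_conjugate_iff u a).mpr hpa)

theorem hurwitz_symmetrizable_eigenvalues_real_negative_general {Λ M : A}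
    (hΛ : IsStrictlyPositive Λ) (hΛM : IsSelfAdjoint (Λ * M)) (hM : ∀ μ ∈ spectrum ℝ M, μ < 0) :
    (∀ μ ∈ spectrum ℂ M, μ.im = 0 ∧ μ.re < 0) ∧ IsStrictlyPositive (-(Λ * M)) := by
  refine ⟨fun μ hμ => ?_, ?_⟩
  · have him : μ.im = 0 := im_eq_zero_of_mem_spectrum_of_isSelfAdjoint_mul hΛ hΛM hμ
    have hre : (μ.re : ℂ) = μ := Complex.ext rfl him.symm
    exact ⟨him, hM μ.re ((spectrum.algebraMap_mem_iff ℂ).mp (by rwa [← hre] at hμ))⟩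
  · have hneg : IsSelfAdjoint (Λ * -M) := by simpa only [mul_neg] using hΛM.neg
    rw [← mul_neg, isStrictlyPositive_mul_iff_spectrum_pos hΛ hneg]
    intro x hx
    rw [← spectrum.neg_eq, Set.mem_neg] at hx
    exact neg_lt_zero.mp (hM (-x) hx)

end CStarAlgebra

section RealToComplex

variable {n : Type*}

lemma spectrum_map_algebraMap {K L : Type*} [Field K] [Field L] [Algebra K L] [Fintype n]
    [DecidableEq n] (P : Matrix n n K) : spectrum K (P.map (algebraMap K L)) = spectrum K P := by
  ext x
  rw [← spectrum.algebraMap_mem_iff L, mem_spectrum_iff_isRoot_charpoly,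
    mem_spectrum_iff_isRoot_charpoly, charpoly_map,
    Polynomial.isRoot_map_iff (algebraMap K L).injective]

variable {𝕜 : Type*} [RCLike 𝕜]

open scoped ComplexOrder in
lemma posDef_iff_isHermitian_and_spectrum_pos [Fintype n] [DecidableEq n] {P : Matrix n n 𝕜} :
    P.PosDef ↔ P.IsHermitian ∧ ∀ x ∈ spectrum ℝ P, 0 < x := by
  refine ⟨fun hP => ⟨hP.isHermitian, ?_⟩, fun ⟨hP, hpos⟩ => ?_⟩
  · rw [hP.isHermitian.spectrum_real_eq_range_eigenvalues, Set.forall_mem_range]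
    exact hP.eigenvalues_pos
  · exact hP.posDef_iff_eigenvalues_pos.mpr fun i => hpos _ (hP.eigenvalues_mem_spectrum_real i)

lemma isHermitian_map_algebraMap_real_iff {P : Matrix n n ℝ} :
    (P.map (algebraMap ℝ 𝕜)).IsHermitian ↔ P.IsHermitian :=
  isHermitian_map_iff (fun _ => by simp) (algebraMap ℝ 𝕜).injective

open scoped ComplexOrder in
lemma posDef_map_algebraMap_real_iff [Finite n] {P : Matrix n n ℝ} :
    (P.map (algebraMap ℝ 𝕜)).PosDef ↔ P.PosDef := by
  classical
  cases nonempty_fintype n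
  rw [posDef_iff_isHermitian_and_spectrum_pos, posDef_iff_isHermitian_and_spectrum_pos,
    isHermitian_map_algebraMap_real_iff, spectrum_map_algebraMap]

end RealToComplex

open scoped MatrixOrder Matrix.Norms.L2Operator ComplexOrder in
/-- if Λ is symmetric positive definite, ΛM is symmetric, and M is
Hurwitz, then every eigenvalue of M is real and negative, and ΛM is symmetric
negative definite (−ΛM is positive definite). -/
theorem hurwitz_symmetrizable_eigenvalues_real_negative
    (n : ℕ) (hn : 0 < n)
    (Λ M : Matrix (Fin n) (Fin n) ℝ)
    (hΛ : Λ.PosDef) (hΛM : (Λ * M).IsSymm)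
    (hHurwitz : ∀ μ ∈ spectrum ℂ (M.map (fun x => (x : ℂ))), μ.re < 0) :
    (∀ μ ∈ spectrum ℂ (M.map (fun x => (x : ℂ))), μ.im = 0 ∧ μ.re < 0) ∧
    (-(Λ * M)).PosDef := by
  have hmap : (Λ * M).map (algebraMap ℝ ℂ) = Λ.map (algebraMap ℝ ℂ) * M.map (algebraMap ℝ ℂ) :=
    Matrix.map_mul
  obtain ⟨hspectrum, hneg⟩ := hurwitz_symmetrizable_eigenvalues_real_negative_general
    (posDef_map_algebraMap_real_iff.mpr hΛ).isStrictlyPositive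
    (hmap ▸ isHermitian_map_algebraMap_real_iff.mpr (isHermitian_iff_isSymm.mpr hΛM))
    (fun μ hμ => hHurwitz μ ((spectrum.algebraMap_mem_iff ℂ).mpr hμ))
  refine ⟨hspectrum, (posDef_map_algebraMap_real_iff (𝕜 := ℂ)).mp ?_⟩
  rw [Matrix.map_neg _ (map_neg _), hmap]
  exact hneg.posDef
end

section
/- Let A and T be real n×n matrices with T symmetric positive semidefinite, A Hurwitz (every complex eigenvalue of A has negative real part), and AᵀT = TA. Then TA is symmetric negative semidefinite. -/
open Matrix

/-!
Write `T = S * S` with `S` Hermitian positive semidefinite, and let `R` be a Hermitian generalized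
inverse of `S` that commutes with `S`, obtained by inverting the nonzero eigenvalues of `S`. The
relation `Aᴴ * T = T * A` says that `A` is self-adjoint for the semi-inner product of `T`, so it
descends to a self-adjoint operator on the quotient by the kernel of `T`. In matrix terms that
operator is `C = S * A * R`: it is Hermitian and satisfies `S * A = C * S`, so its nonzero
eigenvalues are real eigenvalues of `A`. Hence `-C` is positive semidefinite, and so is
`S * (-C) * S = -(T * A)`.
-/

theorem semiconjBy_mul_mul_of_semiconjBy_mul_self {M : Type*} [Semigroup M] {a b r s : M}
    (hrss : r * s * s = s) (hsrs : s * r * s = s) (h : SemiconjBy (s * s) a b) :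
    SemiconjBy s a (s * a * r) := by
  have hsa : s * a = r * b * (s * s) := by
    rw [mul_assoc r, ← h.eq, ← mul_assoc, ← mul_assoc, hrss]
  calc s * a = r * b * (s * (s * r * s)) := by rw [hsrs, hsa]
    _ = s * a * r * s := by simp only [hsa, mul_assoc]

theorem isSelfAdjoint_mul_mul_of_semiconjBy_star {M : Type*} [Semigroup M] [StarMul M]
    {a r s : M} (hs : IsSelfAdjoint s) (hr : IsSelfAdjoint r) (hrss : r * s * s = s)
    (h : SemiconjBy (s * s) a (star a)) : IsSelfAdjoint (s * a * r) := by
  have hssa : IsSelfAdjoint (s * s * a) := by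
    rw [isSelfAdjoint_iff, star_mul, star_mul, hs.star_eq, h.eq]
  have hconj : r * (s * s * a) * r = s * a * r := by simp only [← mul_assoc, hrss]
  exact hconj ▸ hssa.conjugate_self hr

theorem spectrum_mul_mul_subset_insert_zero_of_semiconjBy {K A : Type*} [Field K] [Ring A]
    [Algebra K A] [IsDedekindFiniteMonoid A] {a r s : A} (h : SemiconjBy s a (s * a * r)) :
    spectrum K (s * a * r) ⊆ insert 0 (spectrum K a) := by
  intro x hx
  by_contra hxa
  obtain ⟨hx0, hxa⟩ := not_or.mp hxa
  obtain ⟨u, hu⟩ := (spectrum.notMem_iff.mp hxa).exists_right_inv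
  have hintertwine : (algebraMap K A x - s * a * r) * s = s * (algebraMap K A x - a) := by
    rw [sub_mul, mul_sub, ← h.eq, Algebra.commutes]
  -- As in Jacobson's lemma, the resolvent of `s * a * r` is `x⁻¹ (1 + s (x - a)⁻¹ a r)`.
  have hinv : (algebraMap K A x - s * a * r) * (1 + s * u * a * r) = algebraMap K A x := by
    calc _ = algebraMap K A x - s * a * r +
          (algebraMap K A x - s * a * r) * s * (u * a * r) := by noncomm_ring
      _ = algebraMap K A x - s * a * r +
          s * ((algebraMap K A x - a) * u) * (a * r) := by rw [hintertwine]; noncomm_ring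
      _ = algebraMap K A x := by rw [hu]; noncomm_ring
  refine hx (IsUnit.of_mul_eq_one ((1 + s * u * a * r) * algebraMap K A x⁻¹) ?_)
  rw [← mul_assoc, hinv, ← map_mul, mul_inv_cancel₀ hx0, map_one]

theorem exists_isSelfAdjoint_commute_mul_mul_eq_self {A : Type*} [Ring A] [StarRing A]
    [TopologicalSpace A] [Algebra ℝ A] [ContinuousFunctionalCalculus ℝ A IsSelfAdjoint]
    {a : A} (ha : IsSelfAdjoint a) (hfin : (spectrum ℝ a).Finite) :
    ∃ r : A, IsSelfAdjoint r ∧ Commute a r ∧ a * r * a = a := by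
  have hcont (f : ℝ → ℝ) : ContinuousOn f (spectrum ℝ a) := hfin.continuousOn f
  refine ⟨cfc (·⁻¹ : ℝ → ℝ) a, cfc_predicate _ a, ?_, ?_⟩
  · simpa only [cfc_id' ℝ a] using cfc_commute_cfc (fun x : ℝ ↦ x) (·⁻¹) a
  · calc a * cfc (·⁻¹ : ℝ → ℝ) a * a = cfc (fun x : ℝ ↦ x * x⁻¹ * x) a := by
          rw [cfc_mul _ _ a (hcont _) (hcont _), cfc_mul _ _ a (hcont _) (hcont _), cfc_id' ℝ a]
      _ = a := by simp only [mul_inv_mul_cancel, cfc_id' ℝ a]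

theorem map_mem_spectrum_map_of_mem_spectrum {K L n : Type*} [Field K] [CommRing L] [Nontrivial L]
    [Fintype n] [DecidableEq n] {A : Matrix n n K} {x : K} (f : K →+* L)
    (hx : x ∈ spectrum K A) : f x ∈ spectrum L (A.map f) := by
  refine mem_spectrum_of_isRoot_charpoly ?_
  rw [charpoly_map]
  exact (mem_spectrum_iff_isRoot_charpoly.mp hx).map

open scoped ComplexOrder MatrixOrder in
theorem hurwitz_posSemidef_commutation_negSemidef_general {𝕜 n : Type*} [RCLike 𝕜] [Fintype n]
    [DecidableEq n] {A T : Matrix n n 𝕜} (hT : T.PosSemidef) (hA : ∀ x ∈ spectrum ℝ A, x ≤ 0)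
    (hcomm : Aᴴ * T = T * A) : (-(T * A)).PosSemidef := by
  let S : Matrix n n 𝕜 := CFC.sqrt T
  have hS : IsSelfAdjoint S := (CFC.sqrt_nonneg T).isSelfAdjoint
  have hSS : S * S = T := CFC.sqrt_mul_sqrt_self T hT.nonneg
  obtain ⟨R, hR, hSR, hSRS⟩ :=
    exists_isSelfAdjoint_commute_mul_mul_eq_self hS finite_real_spectrum
  have hRSS : R * S * S = S := by rw [← hSR.eq, hSRS]
  have hsemiconj : SemiconjBy (S * S) A (star A) := by rw [hSS]; exact hcomm.symm
  have hCS : SemiconjBy S A (S * A * R) :=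
    semiconjBy_mul_mul_of_semiconjBy_mul_self hRSS hSRS hsemiconj
  have hC : (S * A * R).IsHermitian :=
    isSelfAdjoint_mul_mul_of_semiconjBy_star hS hR hRSS hsemiconj
  have hC_neg : (-(S * A * R)).PosSemidef := by
    refine hC.neg.posSemidef_iff_eigenvalues_nonneg.mpr fun i ↦ ?_
    have hx := hC.neg.eigenvalues_mem_spectrum_real i
    rw [← spectrum.neg_eq] at hx
    rcases spectrum_mul_mul_subset_insert_zero_of_semiconjBy hCS hx with hx | hx
    · exact (neg_eq_zero.mp hx).ge
    · exact neg_nonpos.mp (hA _ hx)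
  have hconj : S * -(S * A * R) * Sᴴ = -(T * A) := by
    rw [show Sᴴ = S from hS, mul_neg, neg_mul, mul_assoc, ← hCS.eq, ← mul_assoc, hSS]
  exact hconj ▸ hC_neg.mul_mul_conjTranspose_same S

/-- if T is symmetric positive semidefinite, A is Hurwitz and
AᵀT = TA, then TA is symmetric negative semidefinite (−TA is positive
semidefinite). -/
theorem hurwitz_posSemidef_commutation_negSemidef
    (n : ℕ) (A T : Matrix (Fin n) (Fin n) ℝ)
    (hT : T.PosSemidef)
    (hHurwitz : ∀ μ ∈ spectrum ℂ (A.map (fun x => (x : ℂ))), μ.re < 0)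
    (hcomm : Aᵀ * T = T * A) :
    (T * A).IsSymm ∧ (-(T * A)).PosSemidef := by
  have hTA : (-(T * A)).PosSemidef := hurwitz_posSemidef_commutation_negSemidef_general hT
    (fun x hx ↦ (hHurwitz x (map_mem_spectrum_map_of_mem_spectrum Complex.ofRealHom hx)).le) hcomm
  exact ⟨isHermitian_iff_isSymm.mp (isHermitian_neg_iff.mp hTA.isHermitian), hTA⟩
end

section
/- Let A, B, C, D be real matrices of sizes n×n, n×m, m×n, m×m respectively, with A Hurwitz (every complex eigenvalue of A has negative real part) and D + Dᵀ positive semidefinite. Suppose there exists a real symmetric positive semidefinite n×n matrix T with AᵀT = TA and TB = Cᵀ. Then T satisfies the passivity linear matrix inequality: the (n+m)×(n+m) block matrix with blocks [AᵀT + TA, TB − Cᵀ; BᵀT − C, −(D + Dᵀ)] is negative semidefinite; consequently the system ẋ = Ax + Bu, y = Cx + Du is passive. -/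
open Matrix MeasureTheory

/-- `(u, x, y)` is a trajectory of the LTI system `ẋ = Ax + Bu, y = Cx + Du`. -/
def IsTrajectory {n m : ℕ} (A : Matrix (Fin n) (Fin n) ℝ) (B : Matrix (Fin n) (Fin m) ℝ)
    (C : Matrix (Fin m) (Fin n) ℝ) (D : Matrix (Fin m) (Fin m) ℝ)
    (u : ℝ → Fin m → ℝ) (x : ℝ → Fin n → ℝ) (y : ℝ → Fin m → ℝ) : Prop :=
  Continuous u ∧ (∀ t : ℝ, HasDerivAt x (A *ᵥ x t + B *ᵥ u t) t) ∧
    ∀ t : ℝ, y t = C *ᵥ x t + D *ᵥ u t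

/-!
`AᵀT = TA` says that `A` is symmetric for the semi-inner product defined by `T`. It therefore
preserves `ker T` and descends to a symmetric operator on the quotient, whose (real) eigenvalues are
eigenvalues of `A`, hence nonpositive; so `TA` is negative semidefinite and the LMI follows.

The LMI makes `xᵀTx / 2` a storage function. Two trajectories with the same past input and output
have states at `t₀` that differ by an unobservable vector. Subtracting the free motion of that
vector changes neither input nor output, so the energy extracted after `t₀` is bounded by the
storage of the reference trajectory at `t₀`.
-/

section SymmetrizableOperators

open Module.End RCLike

theorem spectrum_subset_of_surjective_of_comp_eq {R V W : Type*} [CommRing R]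
    [AddCommGroup V] [Module R V] [AddCommGroup W] [Module R W] [Module.Finite R W]
    {f : Module.End R V} {g : Module.End R W} {L : V →ₗ[R] W} (hL : Function.Surjective L)
    (hgL : g ∘ₗ L = L ∘ₗ f) : spectrum R g ⊆ spectrum R f := by
  intro μ hμg hμf
  have hcomp (v : V) : (algebraMap R (Module.End R W) μ - g) (L v) =
      L ((algebraMap R (Module.End R V) μ - f) v) := by
    simpa using LinearMap.congr_fun hgL v
  have hsurj : Function.Surjective (algebraMap R (Module.End R W) μ - g) := by
    intro w
    obtain ⟨v, rfl⟩ := hL w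
    obtain ⟨v, rfl⟩ := ((Module.End.isUnit_iff _).1 hμf).surjective v
    exact ⟨L v, hcomp v⟩
  exact hμg ((Module.End.isUnit_iff _).2
    (OrzechProperty.bijective_of_surjective_endomorphism _ hsurj))

variable {𝕜 V E : Type*} [RCLike 𝕜] [NormedAddCommGroup E] [InnerProductSpace 𝕜 E]

theorem isPositive_of_isSymmetric_of_eigenvalues_nonneg [FiniteDimensional 𝕜 E] {g : E →ₗ[𝕜] E}
    (hg : g.IsSymmetric) (hnonneg : ∀ μ : ℝ, HasEigenvalue g (μ : 𝕜) → 0 ≤ μ) :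
    g.IsPositive := by
  refine ⟨hg, fun x => ?_⟩
  have hterm (i) :
      inner 𝕜 (g x) (hg.eigenvectorBasis rfl i) * inner 𝕜 (hg.eigenvectorBasis rfl i) x =
        ((hg.eigenvalues rfl i * ‖inner 𝕜 x (hg.eigenvectorBasis rfl i)‖ ^ 2 : ℝ) : 𝕜) := by
    rw [hg, hg.apply_eigenvectorBasis, inner_smul_right, mul_assoc, ← inner_conj_symm _ x,
      RCLike.mul_conj, ofReal_mul, ofReal_pow]
  rw [← (hg.eigenvectorBasis rfl).sum_inner_mul_inner, map_sum]
  refine Finset.sum_nonneg fun i _ => ?_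
  rw [hterm, ofReal_re]
  exact mul_nonneg (hnonneg _ (hg.hasEigenvalue_eigenvalues rfl i)) (sq_nonneg _)

variable [AddCommGroup V] [Module 𝕜 V] {f : Module.End 𝕜 V} {L : V →ₗ[𝕜] E}

theorem exists_comp_eq_comp_of_inner_map_symm (hL : Function.Surjective L)
    (hf : ∀ v w, inner 𝕜 (L (f v)) (L w) = inner 𝕜 (L v) (L (f w))) :
    ∃ g : Module.End 𝕜 E, g ∘ₗ L = L ∘ₗ f := by
  obtain ⟨R, hR⟩ := L.exists_rightInverse_of_surjective (LinearMap.range_eq_top.2 hL)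
  refine ⟨L ∘ₗ f ∘ₗ R, LinearMap.ext fun v => ext_inner_right 𝕜 fun x => ?_⟩
  obtain ⟨w, rfl⟩ := hL x
  calc
    inner 𝕜 (L (f (R (L v)))) (L w) = inner 𝕜 (L (R (L v))) (L (f w)) := hf _ _
    _ = inner 𝕜 (L v) (L (f w)) := by rw [← LinearMap.comp_apply L R, hR, LinearMap.id_apply]
    _ = inner 𝕜 (L (f v)) (L w) := (hf v w).symm

theorem re_inner_map_nonneg_of_surjective [FiniteDimensional 𝕜 E] (hL : Function.Surjective L)
    (hf : ∀ v w, inner 𝕜 (L (f v)) (L w) = inner 𝕜 (L v) (L (f w)))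
    (hspec : ∀ μ : ℝ, (μ : 𝕜) ∈ spectrum 𝕜 f → 0 ≤ μ) (v : V) :
    0 ≤ re (inner 𝕜 (L (f v)) (L v)) := by
  obtain ⟨g, hgL⟩ := exists_comp_eq_comp_of_inner_map_symm hL hf
  have hgL_apply (v : V) : g (L v) = L (f v) := LinearMap.congr_fun hgL v
  have hg : g.IsSymmetric := by
    intro x y
    obtain ⟨v, rfl⟩ := hL x
    obtain ⟨w, rfl⟩ := hL y
    rw [hgL_apply, hgL_apply, hf]
  have hpos : g.IsPositive := isPositive_of_isSymmetric_of_eigenvalues_nonneg hg fun μ hμ =>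
    hspec μ (spectrum_subset_of_surjective_of_comp_eq hL hgL hμ.mem_spectrum)
  simpa only [hgL_apply] using hpos.re_inner_nonneg_left (L v)

theorem re_inner_map_nonneg_of_spectrum_nonneg [FiniteDimensional 𝕜 V]
    (hf : ∀ v w, inner 𝕜 (L (f v)) (L w) = inner 𝕜 (L v) (L (f w)))
    (hspec : ∀ μ : ℝ, (μ : 𝕜) ∈ spectrum 𝕜 f → 0 ≤ μ) (v : V) :
    0 ≤ re (inner 𝕜 (L (f v)) (L v)) :=
  re_inner_map_nonneg_of_surjective L.surjective_rangeRestrict hf hspec v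

end SymmetrizableOperators

section SymmetrizableMatrices

variable {𝕜 l m n : Type*} [RCLike 𝕜] [Fintype l] [Fintype m] [Fintype n] [DecidableEq n]

theorem inner_toEuclideanLin_conjTranspose_mul [DecidableEq l] (S : Matrix m n 𝕜)
    (M : Matrix m l 𝕜) (v : EuclideanSpace 𝕜 l) (w : EuclideanSpace 𝕜 n) :
    inner 𝕜 (toEuclideanLin (Sᴴ * M) v) w =
      inner 𝕜 (toEuclideanLin M v) (toEuclideanLin S w) := by
  classical
  rw [toLpLin_mul_same, LinearMap.comp_apply, toEuclideanLin_conjTranspose_eq_adjoint,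
    LinearMap.adjoint_inner_left]

open scoped MatrixOrder ComplexOrder in
theorem posSemidef_mul_of_spectrum_nonneg {T A : Matrix n n 𝕜} (hT : T.PosSemidef)
    (hTA : Aᴴ * T = T * A) (hA : ∀ μ : ℝ, (μ : 𝕜) ∈ spectrum 𝕜 A → 0 ≤ μ) :
    (T * A).PosSemidef := by
  have hsymm : (toEuclideanLin (T * A)).IsSymmetric := by
    rw [isSymmetric_toEuclideanLin_iff, ← hTA, IsHermitian, conjTranspose_mul,
      conjTranspose_conjTranspose, hT.isHermitian.eq, hTA]
  obtain ⟨S, rfl⟩ := CStarAlgebra.nonneg_iff_eq_star_mul_self.mp hT.nonneg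
  have hinner (v w) : inner 𝕜 (toEuclideanLin S (toEuclideanLin A v)) (toEuclideanLin S w) =
      inner 𝕜 (toEuclideanLin (star S * S * A) v) w := by
    rw [star_eq_conjTranspose, Matrix.mul_assoc, inner_toEuclideanLin_conjTranspose_mul,
      toLpLin_mul_same, LinearMap.comp_apply]
  rw [← isPositive_toEuclideanLin_iff]
  refine ⟨hsymm, fun v => ?_⟩
  rw [← hinner]
  refine re_inner_map_nonneg_of_spectrum_nonneg (fun v w => ?_) (fun μ hμ => hA μ ?_) v
  · rw [hinner, hsymm, ← inner_conj_symm, ← hinner, inner_conj_symm]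
  · rwa [← spectrum_toLpLin]

open scoped ComplexOrder in
theorem posSemidef_neg_add_of_spectrum_nonpos {T A : Matrix n n 𝕜} (hT : T.PosSemidef)
    (hTA : Aᴴ * T = T * A) (hA : ∀ μ : ℝ, (μ : 𝕜) ∈ spectrum 𝕜 A → μ ≤ 0) :
    (-(Aᴴ * T + T * A)).PosSemidef := by
  have hneg : (T * -A).PosSemidef := by
    refine posSemidef_mul_of_spectrum_nonneg hT (by simp [hTA]) fun μ hμ => ?_
    rw [← spectrum.neg_eq, Set.mem_neg, ← RCLike.ofReal_neg] at hμ
    exact neg_nonpos.1 (hA _ hμ)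
  simpa only [hTA, Matrix.mul_neg, neg_add] using hneg.add hneg

theorem map_mem_spectrum_map {R S : Type*} [CommRing R] [CommRing S] (φ : R →+* S) [IsLocalHom φ]
    {A : Matrix n n R} {μ : R} (hμ : μ ∈ spectrum R A) : φ μ ∈ spectrum S (A.map φ) := by
  rw [mem_spectrum_iff_not_isUnit_eval_charpoly] at hμ ⊢
  rwa [charpoly_map, Polynomial.eval_map_apply, isUnit_map_iff]

end SymmetrizableMatrices

section Unobservable

open Set Filter Topology

variable {E F : Type*} [NormedAddCommGroup E] [NormedSpace ℝ E]
  [NormedAddCommGroup F] [NormedSpace ℝ F] {A : E →L[ℝ] E} {C : E →L[ℝ] F}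

/-- The unobservable subspace of `ẋ = Ax, y = Cx`: the vectors annihilated by every `C Aᵏ`. It
consists of the initial states whose output is identically zero. -/
def unobservableSubspace (A : E →L[ℝ] E) (C : E →L[ℝ] F) : Submodule ℝ E :=
  ⨅ k : ℕ, (C ∘L A ^ k).ker

theorem mem_unobservableSubspace {v : E} :
    v ∈ unobservableSubspace A C ↔ ∀ k : ℕ, (C ∘L A ^ k) v = 0 := by
  simp only [unobservableSubspace, Submodule.mem_iInf, LinearMap.mem_ker,
    ContinuousLinearMap.coe_coe]

theorem comp_pow_apply_eq_zero_of_hasDerivAt {U : Set ℝ} (hU : IsOpen U) {z : ℝ → E}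
    (hz : ∀ t ∈ U, HasDerivAt z (A (z t)) t) (hCz : ∀ t ∈ U, C (z t) = 0) (k : ℕ) :
    ∀ t ∈ U, (C ∘L A ^ k) (z t) = 0 := by
  induction k with
  | zero => exact hCz
  | succ k ih =>
    intro t ht
    have hderiv : HasDerivAt (fun s => (C ∘L A ^ k) (z s)) ((C ∘L A ^ k) (A (z t))) t :=
      (C ∘L A ^ k).hasFDerivAt.comp_hasDerivAt t (hz t ht)
    have hzero : HasDerivAt (fun s => (C ∘L A ^ k) (z s)) 0 t :=
      (hasDerivAt_const t 0).congr_of_eventuallyEq (eventually_of_mem (hU.mem_nhds ht) ih)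
    rw [pow_succ]
    exact hderiv.unique hzero

theorem mem_unobservableSubspace_of_hasDerivAt {z : ℝ → E} {t₀ : ℝ} (hcont : ContinuousAt z t₀)
    (hz : ∀ t < t₀, HasDerivAt z (A (z t)) t) (hCz : ∀ t < t₀, C (z t) = 0) :
    z t₀ ∈ unobservableSubspace A C := by
  refine mem_unobservableSubspace.2 fun k => ?_
  have hlim : Tendsto (fun t => (C ∘L A ^ k) (z t)) (𝓝[<] t₀) (𝓝 ((C ∘L A ^ k) (z t₀))) :=
    ((C ∘L A ^ k).continuous.continuousAt.comp hcont).tendsto.mono_left nhdsWithin_le_nhds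
  have hzero : ∀ᶠ t in 𝓝[<] t₀, (C ∘L A ^ k) (z t) = 0 :=
    eventually_of_mem self_mem_nhdsWithin
      (comp_pow_apply_eq_zero_of_hasDerivAt isOpen_Iio hz hCz k)
  exact tendsto_nhds_unique_of_eventuallyEq hlim tendsto_const_nhds hzero

variable [CompleteSpace E]

theorem apply_exp_smul_apply_eq_zero {v : E} (hv : v ∈ unobservableSubspace A C) (t : ℝ) :
    C (NormedSpace.exp (t • A) v) = 0 := by
  have hsum : HasSum (fun k : ℕ => C (((k.factorial⁻¹ : ℝ) • (t • A) ^ k) v))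
      (C (NormedSpace.exp (t • A) v)) :=
    (NormedSpace.exp_series_hasSum_exp' (𝕂 := ℝ) (t • A)).mapL
      (C ∘L ContinuousLinearMap.apply ℝ E v)
  have hterm (k : ℕ) : C (((k.factorial⁻¹ : ℝ) • (t • A) ^ k) v) = 0 := by
    rw [smul_pow, _root_.smul_apply, _root_.smul_apply, map_smul, map_smul,
      ← ContinuousLinearMap.comp_apply, mem_unobservableSubspace.1 hv, smul_zero, smul_zero]
  simp only [hterm] at hsum
  exact hsum.unique hasSum_zero

theorem exists_hasDerivAt_of_mem_unobservableSubspace {v : E}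
    (hv : v ∈ unobservableSubspace A C) (t₀ : ℝ) :
    ∃ w : ℝ → E, w t₀ = v ∧ (∀ t, HasDerivAt w (A (w t)) t) ∧ ∀ t, C (w t) = 0 := by
  refine ⟨fun t => NormedSpace.exp ((t - t₀) • A) v, by simp, fun t => ?_,
    fun t => apply_exp_smul_apply_eq_zero hv (t - t₀)⟩
  exact (ContinuousLinearMap.apply ℝ E v).hasFDerivAt.comp_hasDerivAt t
    ((hasDerivAt_exp_smul_const' A (t - t₀)).comp_sub_const t t₀)

end Unobservable

section Derivatives

variable {𝕜 m n : Type*} [NontriviallyNormedField 𝕜] [Fintype n]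

theorem hasDerivAt_mulVec [CompleteSpace 𝕜] [Finite m] (M : Matrix m n 𝕜) {x : 𝕜 → n → 𝕜}
    {x' : n → 𝕜} {t : 𝕜} (hx : HasDerivAt x x' t) :
    HasDerivAt (fun s => M *ᵥ x s) (M *ᵥ x') t :=
  have := Fintype.ofFinite m
  M.mulVecLin.toContinuousLinearMap.hasFDerivAt.comp_hasDerivAt t hx

theorem hasDerivAt_dotProduct {R : Type*} [NormedRing R] [NormedAlgebra 𝕜 R] {x y : 𝕜 → n → R}
    {x' y' : n → R} {t : 𝕜} (hx : HasDerivAt x x' t) (hy : HasDerivAt y y' t) :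
    HasDerivAt (fun s => x s ⬝ᵥ y s) (x' ⬝ᵥ y t + x t ⬝ᵥ y') t := by
  simp only [dotProduct, ← Finset.sum_add_distrib]
  exact HasDerivAt.fun_sum fun i _ => (hasDerivAt_pi.1 hx i).mul (hasDerivAt_pi.1 hy i)

end Derivatives

section LinearMatrixInequality

theorem posSemidef_fromBlocks_diagonal {m n R : Type*} [Finite m] [Finite n] [Ring R]
    [PartialOrder R] [StarRing R] [AddLeftMono R] {P : Matrix m m R} {N : Matrix n n R}
    (hP : P.PosSemidef) (hN : N.PosSemidef) : (fromBlocks P 0 0 N).PosSemidef := by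
  have := Fintype.ofFinite m
  have := Fintype.ofFinite n
  refine .of_dotProduct_mulVec_nonneg (.fromBlocks hP.1 conjTranspose_zero hN.1) fun z => ?_
  have hsum := add_nonneg (hP.dotProduct_mulVec_nonneg (z ∘ Sum.inl))
    (hN.dotProduct_mulVec_nonneg (z ∘ Sum.inr))
  simpa [fromBlocks_mulVec, dotProduct] using hsum

variable {m n : Type*} [Fintype n] {A : Matrix n n ℝ} {B : Matrix n m ℝ}
  {C : Matrix m n ℝ} {D : Matrix m m ℝ} {Q : Matrix n n ℝ}

/-- The passivity linear matrix inequality for the system `ẋ = Ax + Bu, y = Cx + Du`, with candidate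
storage function `xᵀQx / 2`. Semidefiniteness of `Q` itself is not part of it. -/
def PassivityLMI (A : Matrix n n ℝ) (B : Matrix n m ℝ) (C : Matrix m n ℝ) (D : Matrix m m ℝ)
    (Q : Matrix n n ℝ) : Prop :=
  (-(fromBlocks (Aᵀ * Q + Q * A) (Q * B - Cᵀ) (Bᵀ * Q - C) (-(D + Dᵀ)))).PosSemidef

theorem passivityLMI_of_lyapunov [Finite m] (hQ : Q.IsSymm)
    (hlyap : (-(Aᵀ * Q + Q * A)).PosSemidef) (hQB : Q * B = Cᵀ)
    (hD : (D + Dᵀ).PosSemidef) : PassivityLMI A B C D Q := by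
  have hBQ : Bᵀ * Q = C := by rw [← hQ.eq, ← transpose_mul, hQB, transpose_transpose]
  rw [PassivityLMI, hQB, hBQ, sub_self, sub_self, fromBlocks_neg, neg_zero, neg_zero, neg_neg]
  exact posSemidef_fromBlocks_diagonal hlyap hD

theorem PassivityLMI.storage_rate_le_supply_rate [Fintype m] (h : PassivityLMI A B C D Q)
    (x : n → ℝ) (u : m → ℝ) :
    (A *ᵥ x + B *ᵥ u) ⬝ᵥ (Q *ᵥ x) + x ⬝ᵥ (Q *ᵥ (A *ᵥ x + B *ᵥ u)) ≤
      2 * u ⬝ᵥ (C *ᵥ x + D *ᵥ u) := by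
  have hquad := h.dotProduct_mulVec_nonneg (Sum.elim x u)
  simp only [fromBlocks_neg, fromBlocks_mulVec, star_trivial, Sum.elim_comp_inl,
    Sum.elim_comp_inr, sumElim_dotProduct_sumElim, neg_mulVec, add_mulVec, sub_mulVec, neg_neg,
    dotProduct_add, dotProduct_sub, dotProduct_neg, ← mulVec_mulVec,
    dotProduct_transpose_mulVec] at hquad
  simp only [mulVec_add, add_dotProduct, dotProduct_add]
  linarith [dotProduct_comm (Q *ᵥ x) (A *ᵥ x), dotProduct_comm (Q *ᵥ x) (B *ᵥ u)]

end LinearMatrixInequality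

section Passivity

variable {n m : ℕ} {A : Matrix (Fin n) (Fin n) ℝ} {B : Matrix (Fin n) (Fin m) ℝ}
  {C : Matrix (Fin m) (Fin n) ℝ} {D : Matrix (Fin m) (Fin m) ℝ}
  {Q : Matrix (Fin n) (Fin n) ℝ} {u u₂ : ℝ → Fin m → ℝ} {x x₂ : ℝ → Fin n → ℝ}
  {y y₂ : ℝ → Fin m → ℝ}

/-- Passivity of `ẋ = Ax + Bu, y = Cx + Du` in the behavioural sense: the energy that can be
extracted from time `t₀` on is bounded in terms of the input and output before `t₀`. -/
def IsPassive (A : Matrix (Fin n) (Fin n) ℝ) (B : Matrix (Fin n) (Fin m) ℝ)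
    (C : Matrix (Fin m) (Fin n) ℝ) (D : Matrix (Fin m) (Fin m) ℝ) : Prop :=
  ∀ u x y, IsTrajectory A B C D u x y → ∀ t₀ : ℝ, ∃ K : ℝ,
    ∀ u₂ x₂ y₂, IsTrajectory A B C D u₂ x₂ y₂ →
      (∀ t < t₀, u₂ t = u t ∧ y₂ t = y t) →
      ∀ t₁ : ℝ, t₀ ≤ t₁ → -∫ t in t₀..t₁, u₂ t ⬝ᵥ y₂ t ≤ K

namespace IsTrajectory

theorem continuous_state (h : IsTrajectory A B C D u x y) : Continuous x :=
  continuous_iff_continuousAt.2 fun t => (h.2.1 t).continuousAt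

theorem continuous_output (h : IsTrajectory A B C D u x y) : Continuous y := by
  rw [funext h.2.2]
  exact (continuous_const.matrix_mulVec h.continuous_state).add
    (continuous_const.matrix_mulVec h.1)

theorem sub_unobservable (h : IsTrajectory A B C D u x y) {w : ℝ → Fin n → ℝ}
    (hw : ∀ t, HasDerivAt w (A *ᵥ w t) t) (hCw : ∀ t, C *ᵥ w t = 0) :
    IsTrajectory A B C D u (x - w) y := by
  refine ⟨h.1, fun t => ?_, fun t => ?_⟩
  · rw [Pi.sub_apply, mulVec_sub, ← add_sub_right_comm]
    exact (h.2.1 t).sub (hw t)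
  · rw [h.2.2, Pi.sub_apply, mulVec_sub, hCw, sub_zero]

theorem sub_mem_unobservableSubspace (h : IsTrajectory A B C D u x y)
    (h₂ : IsTrajectory A B C D u₂ x₂ y₂) {t₀ : ℝ}
    (hpast : ∀ t < t₀, u₂ t = u t ∧ y₂ t = y t) :
    x₂ t₀ - x t₀ ∈ unobservableSubspace A.mulVecLin.toContinuousLinearMap
      C.mulVecLin.toContinuousLinearMap := by
  refine mem_unobservableSubspace_of_hasDerivAt (z := x₂ - x)
    (h₂.continuous_state.sub h.continuous_state).continuousAt (fun t ht => ?_) fun t ht => ?_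
  · have hderiv := (h₂.2.1 t).sub (h.2.1 t)
    rwa [(hpast t ht).1, add_sub_add_right_eq_sub, ← mulVec_sub] at hderiv
  · have hy := (hpast t ht).2
    rw [h₂.2.2, h.2.2, (hpast t ht).1, add_left_inj] at hy
    exact (mulVec_sub C (x₂ t) (x t)).trans (sub_eq_zero.2 hy)

theorem exists_state_eq_of_past_eq (h : IsTrajectory A B C D u x y)
    (h₂ : IsTrajectory A B C D u₂ x₂ y₂) {t₀ : ℝ}
    (hpast : ∀ t < t₀, u₂ t = u t ∧ y₂ t = y t) :
    ∃ x₃, x₃ t₀ = x t₀ ∧ IsTrajectory A B C D u₂ x₃ y₂ := by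
  obtain ⟨w, hw₀, hw, hCw⟩ :=
    exists_hasDerivAt_of_mem_unobservableSubspace (h.sub_mem_unobservableSubspace h₂ hpast) t₀
  exact ⟨x₂ - w, by rw [Pi.sub_apply, hw₀, sub_sub_cancel], h₂.sub_unobservable hw hCw⟩

end IsTrajectory

namespace PassivityLMI

theorem storage_sub_le_integral (h : PassivityLMI A B C D Q) (htraj : IsTrajectory A B C D u x y)
    {t₀ t₁ : ℝ} (ht : t₀ ≤ t₁) :
    x t₁ ⬝ᵥ (Q *ᵥ x t₁) - x t₀ ⬝ᵥ (Q *ᵥ x t₀) ≤ 2 * ∫ t in t₀..t₁, u t ⬝ᵥ y t := by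
  have hstorage (t : ℝ) := hasDerivAt_dotProduct (htraj.2.1 t) (hasDerivAt_mulVec Q (htraj.2.1 t))
  have hsupply : Continuous fun t => 2 * u t ⬝ᵥ y t :=
    continuous_const.mul (htraj.1.dotProduct htraj.continuous_output)
  rw [← intervalIntegral.integral_const_mul]
  refine intervalIntegral.sub_le_integral_of_hasDeriv_right_of_le ht
    (fun t _ => (hstorage t).continuousAt.continuousWithinAt)
    (fun t _ => (hstorage t).hasDerivWithinAt) hsupply.continuousOn.integrableOn_Icc fun t _ => ?_
  rw [htraj.2.2]
  exact h.storage_rate_le_supply_rate (x t) (u t)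

theorem isPassive (h : PassivityLMI A B C D Q) (hQ : Q.PosSemidef) : IsPassive A B C D := by
  intro u x y htraj t₀
  refine ⟨x t₀ ⬝ᵥ (Q *ᵥ x t₀) / 2, fun u₂ x₂ y₂ htraj₂ hpast t₁ ht => ?_⟩
  obtain ⟨x₃, hx₃, htraj₃⟩ := htraj.exists_state_eq_of_past_eq htraj₂ hpast
  have hdissipation := h.storage_sub_le_integral htraj₃ ht
  have hnonneg : 0 ≤ x₃ t₁ ⬝ᵥ (Q *ᵥ x₃ t₁) := hQ.dotProduct_mulVec_nonneg (x₃ t₁)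
  rw [hx₃] at hdissipation
  linarith

end PassivityLMI

theorem lemma_passivity_lmi_and_passive_general (hA : ∀ μ ∈ spectrum ℝ A, μ ≤ 0)
    (hD : (D + Dᵀ).PosSemidef) {T : Matrix (Fin n) (Fin n) ℝ} (hT : T.PosSemidef)
    (hTA : Aᵀ * T = T * A) (hTB : T * B = Cᵀ) :
    PassivityLMI A B C D T ∧ IsPassive A B C D := by
  have hlyap : (-(Aᵀ * T + T * A)).PosSemidef := posSemidef_neg_add_of_spectrum_nonpos hT hTA hA
  have hLMI : PassivityLMI A B C D T := passivityLMI_of_lyapunov hT.isHermitian hlyap hTB hD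
  exact ⟨hLMI, hLMI.isPassive hT⟩

end Passivity

/-- if A is Hurwitz, D + Dᵀ is positive semidefinite and there is a
symmetric positive semidefinite T with AᵀT = TA and TB = Cᵀ, then T satisfies the
passivity LMI (the block matrix is negative semidefinite) and the system is
passive. -/
theorem lemma_passivity_lmi_and_passive
    (n m : ℕ)
    (A : Matrix (Fin n) (Fin n) ℝ) (B : Matrix (Fin n) (Fin m) ℝ)
    (C : Matrix (Fin m) (Fin n) ℝ) (D : Matrix (Fin m) (Fin m) ℝ)
    (hHurwitz : ∀ μ ∈ spectrum ℂ (A.map (fun x => (x : ℂ))), μ.re < 0)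
    (hD : (D + Dᵀ).PosSemidef)
    (T : Matrix (Fin n) (Fin n) ℝ) (hT : T.PosSemidef)
    (hTA : Aᵀ * T = T * A) (hTB : T * B = Cᵀ) :
    (-(Matrix.fromBlocks (Aᵀ * T + T * A) (T * B - Cᵀ) (Bᵀ * T - C)
        (-(D + Dᵀ)))).PosSemidef ∧
    (∀ u x y, IsTrajectory A B C D u x y → ∀ t₀ : ℝ, ∃ K : ℝ,
      ∀ u₂ x₂ y₂, IsTrajectory A B C D u₂ x₂ y₂ →
        (∀ t < t₀, u₂ t = u t ∧ y₂ t = y t) →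
        ∀ t₁ : ℝ, t₀ ≤ t₁ → -∫ t in t₀..t₁, u₂ t ⬝ᵥ y₂ t ≤ K) :=
  lemma_passivity_lmi_and_passive_general
    (fun _ hμ => (hHurwitz _ (map_mem_spectrum_map Complex.ofRealHom hμ)).le) hD hT hTA hTB
end
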